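/- Let β⁰ ∈ ℝ^n, let k be an integer with 1 ≤ k < n, let C > 0, and define g(μ) = Σ_{j=1}^n min{[β_j⁰ − μ]_+, C/k} − C, where β_[j]⁰ denotes the j-th largest entry of β⁰. Then g(β_[k]⁰) ≤ −C/k < 0 and g(β_[k+1]⁰ − C/k) ≥ C/k > 0; consequently, every root μ′ of g(μ) = 0 satisfies β_[k+1]⁰ − C/k < μ′ < β_[k]⁰. -/

import Mathlib

/-- The `k`-th largest value among `v 1, ..., v n` (1-indexed `k`). -/
noncomputable def kthLargest {n : ℕ} (v : Fin n → ℝ) (k : ℕ) : ℝ :=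
  ((List.ofFn v).insertionSort (· ≥ ·)).getD (k - 1) 0

/-!
Fewer than `k` entries exceed the `k`-th largest one, and at least `k + 1` entries are no smaller
than the `(k + 1)`-st largest one. An entry contributes to `g μ + C` only if it exceeds `μ`, and
then at most the cap `C / k`; it contributes the full cap as soon as it is at least `μ + C / k`.
Hence `g + C` is at most `(k - 1) * (C / k)` at the first point and at least `(k + 1) * (C / k)` at
the second. Since `g` is antitone, its roots lie strictly between the two points.
-/

open Finset

section CappedExcess

variable {ι G : Type*} [Fintype ι] [AddCommGroup G] [LinearOrder G]

/-- The total excess of the entries of `v` over the level `μ`, each entry counting for at most the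
cap `c`. The function `g` of the theorem is `cappedExcess v (C / k) μ - C`. -/
def cappedExcess (v : ι → G) (c μ : G) : G :=
  ∑ j, min (max (v j - μ) 0) c

variable [IsOrderedAddMonoid G]

lemma antitone_cappedExcess (v : ι → G) (c : G) : Antitone (cappedExcess v c) := by
  intro μ ν hμν
  unfold cappedExcess
  gcongr

lemma cappedExcess_le_card_nsmul (v : ι → G) (c μ : G) :
    cappedExcess v c μ ≤ #{j | μ < v j} • c := by
  rw [← sum_const, sum_filter]
  refine sum_le_sum fun j _ => ?_
  split_ifs with hj
  · exact min_le_right _ _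
  · exact min_le_of_left_le (max_le (sub_nonpos.2 (not_lt.1 hj)) le_rfl)

lemma card_nsmul_le_cappedExcess_sub (v : ι → G) {c : G} (hc : 0 ≤ c) (μ : G) :
    #{j | μ ≤ v j} • c ≤ cappedExcess v c (μ - c) := by
  rw [← sum_const, sum_filter]
  refine sum_le_sum fun j _ => ?_
  split_ifs with hj
  · refine le_min (le_max_of_le_left ?_) le_rfl
    rwa [le_sub_iff_add_le, add_sub_cancel]
  · exact le_min (le_max_right _ _) hc

end CappedExcess

section OrderStatistics

variable {n : ℕ}

lemma exists_perm_antitone_comp {α : Type*} [LinearOrder α] (v : Fin n → α) :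
    ∃ σ : Equiv.Perm (Fin n), Antitone (v ∘ σ) :=
  ⟨Tuple.sort (OrderDual.toDual ∘ v), Tuple.monotone_sort (OrderDual.toDual ∘ v)⟩

lemma kthLargest_succ_eq_of_antitone_comp {v : Fin n → ℝ} {σ : Equiv.Perm (Fin n)}
    (hσ : Antitone (v ∘ σ)) (i : Fin n) : kthLargest v (i + 1) = v (σ i) := by
  have hsort : (List.ofFn v).insertionSort (· ≥ ·) = List.ofFn (v ∘ σ) :=
    ((List.perm_insertionSort _ _).trans (σ.ofFn_comp_perm v).symm).eq_of_pairwise'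
      (List.pairwise_insertionSort _ _) hσ.sortedGE_ofFn.pairwise
  simp [kthLargest, hsort]

lemma card_kthLargest_succ_lt_le (v : Fin n → ℝ) (i : Fin n) :
    #{j | kthLargest v (i + 1) < v j} ≤ i := by
  obtain ⟨σ, hσ⟩ := exists_perm_antitone_comp v
  rw [kthLargest_succ_eq_of_antitone_comp hσ]
  calc #{j | v (σ i) < v j} ≤ #((Iio i).map σ.toEmbedding) := card_le_card fun j hj => by
        rw [mem_map_equiv, mem_Iio]
        exact hσ.reflect_lt (by simpa using hj)
    _ = i := by rw [card_map, Fin.card_Iio]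

lemma succ_le_card_kthLargest_succ_le (v : Fin n → ℝ) (i : Fin n) :
    i + 1 ≤ #{j | kthLargest v (i + 1) ≤ v j} := by
  obtain ⟨σ, hσ⟩ := exists_perm_antitone_comp v
  rw [kthLargest_succ_eq_of_antitone_comp hσ]
  calc (i + 1 : ℕ) = #((Iic i).map σ.toEmbedding) := by rw [card_map, Fin.card_Iic]
    _ ≤ #{j | v (σ i) ≤ v j} := card_le_card fun j hj => by
        rw [mem_map_equiv, mem_Iic] at hj
        simpa using hσ hj

lemma cappedExcess_kthLargest_succ_le (v : Fin n → ℝ) {c : ℝ} (hc : 0 ≤ c) (i : Fin n) :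
    cappedExcess v c (kthLargest v (i + 1)) ≤ i * c := by
  rw [← nsmul_eq_mul]
  exact (cappedExcess_le_card_nsmul v c _).trans
    (nsmul_le_nsmul_left hc (card_kthLargest_succ_lt_le v i))

lemma le_cappedExcess_kthLargest_succ_sub (v : Fin n → ℝ) {c : ℝ} (hc : 0 ≤ c) (i : Fin n) :
    (i + 1) * c ≤ cappedExcess v c (kthLargest v (i + 1) - c) := by
  rw [← Nat.cast_succ, ← nsmul_eq_mul]
  exact (nsmul_le_nsmul_left hc (succ_le_card_kthLargest_succ_le v i)).trans
    (card_nsmul_le_cappedExcess_sub v hc _)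

end OrderStatistics

/-- sign evaluations of `g(μ) = Σ_j min{[β⁰_j − μ]_+, C/k} − C` at
`β⁰_[k]` and `β⁰_[k+1] − C/k`, and the resulting bracketing of any root of `g`. -/
theorem g_sign_evaluations_and_root_bracketing
    (n k : ℕ) (hk1 : 1 ≤ k) (hkn : k < n) (β0 : Fin n → ℝ)
    (C : ℝ) (hCpos : 0 < C)
    (g : ℝ → ℝ) (hg : ∀ μ, g μ = (∑ j, min (max (β0 j - μ) 0) (C / k)) - C) :
    g (kthLargest β0 k) ≤ -C / k ∧ (-C / k : ℝ) < 0 ∧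
      C / k ≤ g (kthLargest β0 (k + 1) - C / k) ∧ (0 : ℝ) < C / k ∧
      ∀ μ' : ℝ, g μ' = 0 →
        kthLargest β0 (k + 1) - C / k < μ' ∧ μ' < kthLargest β0 k := by
  have hk : (0 : ℝ) < k := Nat.cast_pos.2 hk1
  have hc : 0 < C / k := div_pos hCpos hk
  have hkc : k * (C / k) = C := mul_div_cancel₀ C hk.ne'
  have hg_excess (μ : ℝ) : g μ = cappedExcess β0 (C / k) μ - C := hg μ
  have hanti : Antitone g := fun μ ν hμν => by
    simpa only [hg_excess] using sub_le_sub_right (antitone_cappedExcess β0 (C / k) hμν) C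
  have hupper : g (kthLargest β0 k) ≤ -(C / k) := by
    have h := cappedExcess_kthLargest_succ_le β0 hc.le ⟨k - 1, by omega⟩
    rw [Nat.sub_add_cancel hk1, Nat.cast_sub hk1, Nat.cast_one] at h
    linarith [hg_excess (kthLargest β0 k)]
  have hlower : C / k ≤ g (kthLargest β0 (k + 1) - C / k) := by
    have h := le_cappedExcess_kthLargest_succ_sub β0 hc.le ⟨k, hkn⟩
    linarith [hg_excess (kthLargest β0 (k + 1) - C / k)]
  rw [neg_div]
  refine ⟨hupper, neg_neg_of_pos hc, hlower, hc, fun μ' hroot => ⟨?_, ?_⟩⟩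
  · exact hanti.reflect_lt (by linarith)
  · exact hanti.reflect_lt (by linarith)
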